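/- Let T be a totally ergodic automorphism of a standard Borel probability space (X,μ) having the AOP property. Let S be a uniquely ergodic continuous map of a compact metric space Y with unique S-invariant probability measure ν, and assume that the measure-theoretic systems (X,μ,T) and (Y,ν,S) are measure-theoretically isomorphic. Then for every multiplicative function u : ℕ → ℂ with |u(n)| ≤ 1, every continuous f : Y → ℂ with ∫_Y f dν = 0, and every y ∈ Y, one has (1/N) Σ_{n ≤ N} f(Sⁿy) u(n) → 0 as N → ∞. -/

import Mathlib

open MeasureTheory Filter

/-- `T` is totally ergodic: every nonzero power of `T` is ergodic. -/
def TotallyErgodic {X : Type*} [MeasurableSpace X] (T : X → X) (μ : Measure X) : Prop :=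
  ∀ m : ℕ, m ≠ 0 → Ergodic (T^[m]) μ

/-- `(X,μ,T)` has asymptotically orthogonal powers (AOP): for all `f, g ∈ L²(μ)` of zero mean
and every `ε > 0` there is `N` such that for all distinct primes `r, s ≥ N` and every ergodic
joining `κ` of `T^r` and `T^s`, `|∫ f(x) conj(g(y)) dκ(x,y)| ≤ ε`. -/
def AOP {X : Type*} [MeasurableSpace X] (T : X → X) (μ : Measure X) : Prop :=
  ∀ f g : X → ℂ, MemLp f 2 μ → MemLp g 2 μ →
    (∫ x, f x ∂μ) = 0 → (∫ x, g x ∂μ) = 0 →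
    ∀ ε > (0:ℝ), ∃ N : ℕ, ∀ r s : ℕ, r.Prime → s.Prime → r ≠ s → N ≤ r → N ≤ s →
      ∀ κ : Measure (X × X), IsProbabilityMeasure κ →
        κ.map Prod.fst = μ → κ.map Prod.snd = μ →
        Ergodic (Prod.map (T^[r]) (T^[s])) κ →
        ‖∫ p, f p.1 * (starRingEnd ℂ) (g p.2) ∂κ‖ ≤ ε

/-- `S` is uniquely ergodic with unique invariant Borel probability measure `ν`. -/
def UniquelyErgodicWith {Y : Type*} [MeasurableSpace Y] (S : Y → Y) (ν : Measure Y) : Prop :=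
  IsProbabilityMeasure ν ∧ ν.map S = ν ∧
  ∀ μ' : Measure Y, IsProbabilityMeasure μ' → μ'.map S = μ' → μ' = ν

/-- `(X,μ,T)` and `(Y,ν,S)` are measure-theoretically isomorphic: there is an invertible
(mod 0) measure-preserving map intertwining the transformations almost everywhere. -/
def MeasureIso {X Y : Type*} [MeasurableSpace X] [MeasurableSpace Y]
    (T : X → X) (μ : Measure X) (S : Y → Y) (ν : Measure Y) : Prop :=
  ∃ φ : X → Y, ∃ ψ : Y → X, Measurable φ ∧ Measurable ψ ∧
    μ.map φ = ν ∧
    (∀ᵐ x ∂μ, ψ (φ x) = x) ∧ (∀ᵐ y ∂ν, φ (ψ y) = y) ∧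
    (∀ᵐ x ∂μ, φ (T x) = S (φ x))

open scoped BoundedContinuousFunction ENNReal

/-- On a compact metric space, the integral of a continuous function against an invariant
probability measure is at most its integral against some ergodic invariant probability measure. -/
theorem exists_ergodic_integral_ge {Z : Type*} [MetricSpace Z] [CompactSpace Z]
    [MeasurableSpace Z] [BorelSpace Z] {R : Z → Z} (hR : Continuous R) (h : Z →ᵇ ℝ)
    (ρ₀ : ProbabilityMeasure Z) (hρ₀ : MeasurePreserving R (ρ₀ : Measure Z) ρ₀) :
    ∃ ρ : ProbabilityMeasure Z, Ergodic R (ρ : Measure Z) ∧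
      ∫ z, h z ∂(ρ₀ : Measure Z) ≤ ∫ z, h z ∂(ρ : Measure Z) := by
  let Φ : ProbabilityMeasure Z → ((Z →ᵇ ℝ) → ℝ) := fun ρ g => ∫ z, g z ∂(ρ : Measure Z)
  have hΦ : Continuous Φ := continuous_pi fun g =>
    continuous_iff_continuousAt.2 fun ρ =>
      (ProbabilityMeasure.tendsto_iff_forall_integral_tendsto.1 tendsto_id) g
  have hinj : Function.Injective Φ := fun ρ₁ ρ₂ h12 =>
    Subtype.ext (ext_of_forall_integral_eq_of_IsFiniteMeasure (μ := (ρ₁ : Measure Z))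
      (ν := (ρ₂ : Measure Z)) fun g => congrFun h12 g)
  let I : Set (ProbabilityMeasure Z) := {ρ | ρ.map hR.measurable.aemeasurable = ρ}
  have hI : IsClosed I :=
    isClosed_eq (ProbabilityMeasure.continuous_map hR) continuous_id
  have hmemI : ∀ ρ : ProbabilityMeasure Z,
      ρ ∈ I ↔ MeasurePreserving R (ρ : Measure Z) ρ := fun ρ => by
    refine ⟨fun hρ => ⟨hR.measurable, ?_⟩, fun hρ => Subtype.ext hρ.map_eq⟩
    exact congrArg Subtype.val hρ
  have hK : IsCompact (Φ '' I) := hI.isCompact.image hΦ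
  let l : ((Z →ᵇ ℝ) → ℝ) →L[ℝ] ℝ := ContinuousLinearMap.proj h
  have hexp : IsExposed ℝ (Φ '' I) (l.toExposed (Φ '' I)) :=
    ContinuousLinearMap.toExposed.isExposed
  have hne : (l.toExposed (Φ '' I)).Nonempty := by
    obtain ⟨x, hx, hmax⟩ := hK.exists_isMaxOn ⟨Φ ρ₀, ρ₀, (hmemI _).2 hρ₀, rfl⟩
      l.continuous.continuousOn
    exact ⟨x, hx, fun y hy => hmax hy⟩
  obtain ⟨x, hx⟩ := (hexp.isCompact hK).extremePoints_nonempty hne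
  have hxl := hx.1.2
  replace hx := hexp.isExtreme.extremePoints_subset_extremePoints hx
  obtain ⟨ρ, hρI, rfl⟩ := hx.1
  refine ⟨ρ, Ergodic.of_mem_extremePoints ?_, hxl (Φ ρ₀) ⟨ρ₀, (hmemI _).2 hρ₀, rfl⟩⟩
  refine mem_extremePoints_iff_left.2 ⟨⟨(hmemI _).1 hρI, inferInstance⟩, ?_⟩
  rintro ν₁ ⟨hν₁, hp₁⟩ ν₂ ⟨hν₂, hp₂⟩ ⟨a, b, ha, hb, hab, hsum⟩
  let P₁ : ProbabilityMeasure Z := ⟨ν₁, hp₁⟩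
  let P₂ : ProbabilityMeasure Z := ⟨ν₂, hp₂⟩
  have ha' : a ≠ ∞ := fun h => by simp [h] at hab
  have hb' : b ≠ ∞ := fun h => by simp [h] at hab
  have key : Φ P₁ = Φ ρ := by
    refine (mem_extremePoints_iff_left.1 hx).2 (Φ P₁) ⟨P₁, (hmemI _).2 hν₁, rfl⟩
      (Φ P₂) ⟨P₂, (hmemI _).2 hν₂, rfl⟩ ⟨a.toReal, b.toReal, ENNReal.toReal_pos ha.ne' ha',
        ENNReal.toReal_pos hb.ne' hb', ?_, ?_⟩
    · rw [← ENNReal.toReal_add ha' hb', hab, ENNReal.toReal_one]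
    · funext g
      change a.toReal * ∫ z, g z ∂ν₁ + b.toReal * ∫ z, g z ∂ν₂ = ∫ z, g z ∂(ρ : Measure Z)
      rw [← hsum, integral_add_measure ((g.integrable ν₁).smul_measure ha')
        ((g.integrable ν₂).smul_measure hb'), integral_smul_measure, integral_smul_measure]
      simp
  exact congrArg Subtype.val (hinj key)

/-- If every ergodic invariant probability measure gives a continuous function integral at
most `c`, then the Birkhoff averages along every orbit are eventually at most any `c' > c`. -/
theorem eventually_birkhoff_le {Z : Type*} [MetricSpace Z] [CompactSpace Z]
    [MeasurableSpace Z] [BorelSpace Z] {R : Z → Z} (hR : Continuous R) (h : Z →ᵇ ℝ) {c c' : ℝ}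
    (hc : ∀ ρ : ProbabilityMeasure Z, Ergodic R (ρ : Measure Z) →
      ∫ z, h z ∂(ρ : Measure Z) ≤ c) (hcc' : c < c') (z : Z) :
    ∀ᶠ N : ℕ in atTop, (N : ℝ)⁻¹ * ∑ n ∈ Finset.Icc 1 N, h (R^[n] z) ≤ c' := by
  by_contra hcon
  rw [not_eventually] at hcon
  have := frequently_iff_neBot.1 hcon
  obtain ⟨U, hU⟩ := Ultrafilter.exists_le
    (atTop ⊓ 𝓟 {N : ℕ | ¬ (N : ℝ)⁻¹ * ∑ n ∈ Finset.Icc 1 N, h (R^[n] z) ≤ c'})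
  have hUtop : (U : Filter ℕ) ≤ atTop := hU.trans inf_le_left
  have hUgt : ∀ᶠ N : ℕ in U, ¬ (N : ℝ)⁻¹ * ∑ n ∈ Finset.Icc 1 N, h (R^[n] z) ≤ c' :=
    hU.trans inf_le_right (mem_principal_self _)
  have hprob : ∀ N : ℕ, N ≠ 0 → IsProbabilityMeasure
      ((N : ℝ≥0∞)⁻¹ • ∑ n ∈ Finset.Icc 1 N, Measure.dirac (R^[n] z)) := fun N hN => ⟨by
    simp [ENNReal.inv_mul_cancel, hN]⟩
  let P : ℕ → ProbabilityMeasure Z := fun N =>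
    if hN : N = 0 then ⟨Measure.dirac z, inferInstance⟩ else ⟨_, hprob N hN⟩
  have hP : ∀ (g : Z →ᵇ ℝ), ∀ᶠ N in (U : Filter ℕ), ∫ w, g w ∂(P N : Measure Z) =
      (N : ℝ)⁻¹ * ∑ n ∈ Finset.Icc 1 N, g (R^[n] z) := fun g => by
    filter_upwards [hUtop (eventually_ne_atTop 0)] with N hN
    have : (P N : Measure Z) = (N : ℝ≥0∞)⁻¹ • ∑ n ∈ Finset.Icc 1 N, Measure.dirac (R^[n] z) :=
      congrArg Subtype.val (dif_neg hN)
    rw [this, integral_smul_measure, integral_finsetSum_measure fun i _ => g.integrable _]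
    simp
  obtain ⟨ρ₀, -, hlim⟩ := isCompact_univ.ultrafilter_le_nhds (U.map P) (by simp)
  have hint : ∀ g : Z →ᵇ ℝ, Tendsto (fun N : ℕ => (N : ℝ)⁻¹ * ∑ n ∈ Finset.Icc 1 N, g (R^[n] z))
      U (nhds (∫ w, g w ∂(ρ₀ : Measure Z))) := fun g =>
    ((ProbabilityMeasure.tendsto_iff_forall_integral_tendsto.1 hlim) g).congr' (hP g)
  have hinv : MeasurePreserving R (ρ₀ : Measure Z) ρ₀ := by
    refine ⟨hR.measurable, ?_⟩
    have := Measure.isProbabilityMeasure_map (μ := (ρ₀ : Measure Z)) hR.measurable.aemeasurable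
    refine ext_of_forall_integral_eq_of_IsFiniteMeasure fun g => ?_
    rw [integral_map hR.measurable.aemeasurable g.continuous.aestronglyMeasurable]
    have h1 := hint (g.compContinuous ⟨R, hR⟩)
    have h2 := (hint g).add (((tendsto_inv_atTop_nhds_zero_nat (𝕜 := ℝ)).mono_left hUtop).mul_const
      (2 * ‖g‖))
    have h3 := (hint g).sub (((tendsto_inv_atTop_nhds_zero_nat (𝕜 := ℝ)).mono_left hUtop).mul_const
      (2 * ‖g‖))
    have hdiff : ∀ N : ℕ, ∑ n ∈ Finset.Icc 1 N, g (R (R^[n] z)) =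
        ∑ n ∈ Finset.Icc 1 N, g (R^[n] z) + (g (R^[N + 1] z) - g (R^[1] z)) := fun N => by
      induction N with
      | zero => simp
      | succ k ih =>
        rw [Finset.sum_Icc_succ_top (by omega), Finset.sum_Icc_succ_top (by omega), ih,
          ← Function.iterate_succ_apply' R (k + 1) z]
        ring
    have hbd : ∀ N : ℕ, |g (R^[N + 1] z) - g (R^[1] z)| ≤ 2 * ‖g‖ := fun N => by
      have := g.norm_coe_le_norm (R^[N + 1] z)
      have := g.norm_coe_le_norm (R^[1] z)
      have := norm_sub_le (g (R^[N + 1] z)) (g (R^[1] z))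
      rw [Real.norm_eq_abs] at this
      linarith
    rw [zero_mul, add_zero] at h2
    rw [zero_mul, sub_zero] at h3
    refine le_antisymm (le_of_tendsto_of_tendsto' h1 h2 fun N => ?_)
      (le_of_tendsto_of_tendsto' h3 h1 fun N => ?_) <;>
    · have := abs_le.1 (hbd N)
      simp only [BoundedContinuousFunction.compContinuous_apply, ContinuousMap.coe_mk, hdiff,
        mul_add, ← mul_sub]
      have hN : (0 : ℝ) ≤ (N : ℝ)⁻¹ := by positivity
      nlinarith
  obtain ⟨ρ, hρ, hle⟩ := exists_ergodic_integral_ge hR h ρ₀ hinv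
  have hge : c' ≤ ∫ w, h w ∂(ρ₀ : Measure Z) :=
    ge_of_tendsto (hint h) (hUgt.mono fun N hN => (not_le.1 hN).le)
  linarith [hc ρ hρ]

/-- If `S` is uniquely ergodic and a power of `S` is ergodic for the unique invariant measure,
then that power is uniquely ergodic. -/
theorem UniquelyErgodicWith.eq_of_iterate {Y : Type*} [MeasurableSpace Y] {S : Y → Y}
    {ν : Measure Y} (huniq : UniquelyErgodicWith S ν) (hS : Measurable S) {r : ℕ} (hr : r ≠ 0)
    (herg : Ergodic (S^[r]) ν) {ρ : Measure Y} [IsProbabilityMeasure ρ]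
    (hρ : MeasurePreserving (S^[r]) ρ ρ) : ρ = ν := by
  have := huniq.1
  have hmapS : ∀ n : ℕ, (ρ.map S^[n]).map S = ρ.map S^[n + 1] := fun n => by
    rw [Measure.map_map hS (hS.iterate n), ← Function.iterate_succ']
  have hprob : ∀ n : ℕ, IsProbabilityMeasure (ρ.map S^[n]) := fun n =>
    Measure.isProbabilityMeasure_map (hS.iterate n).aemeasurable
  have havg : (r : ℝ≥0∞)⁻¹ • ∑ n ∈ Finset.range r, ρ.map S^[n] = ν := by
    refine huniq.2.2 _ ⟨?_⟩ ?_
    · simp [ENNReal.inv_mul_cancel, hr]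
    · rw [Measure.map_smul]
      congr 1
      have hsum : (∑ n ∈ Finset.range r, ρ.map S^[n]).map S
          = ∑ n ∈ Finset.range r, (ρ.map S^[n]).map S := by
        have := map_sum (Measure.mapₗ (α := Y) (β := Y) S) (fun n => ρ.map S^[n]) (Finset.range r)
        simpa only [Measure.mapₗ_apply_of_measurable hS] using this
      rw [hsum, Finset.sum_congr rfl fun n _ => hmapS n]
      obtain ⟨k, rfl⟩ := Nat.exists_eq_succ_of_ne_zero hr
      rw [Finset.sum_range_succ, Finset.sum_range_succ']
      congr 1
      rw [show k + 1 = k.succ from rfl, hρ.map_eq]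
      simp
  refine herg.eq_of_absolutelyContinuous hρ ?_
  rw [← havg]
  refine Measure.AbsolutelyContinuous.mk fun s _ hs => ?_
  simp only [Measure.smul_apply, smul_eq_mul, mul_eq_zero, ENNReal.inv_eq_zero,
    ENNReal.natCast_ne_top, false_or, Measure.coe_finsetSum, Finset.sum_apply,
    Finset.sum_eq_zero_iff, Finset.mem_range] at hs
  simpa using hs 0 (Nat.pos_of_ne_zero hr)

/-- A factor of an ergodic system is ergodic, when the factor map intertwines the
transformations almost everywhere. -/
theorem Ergodic.map_of_ae_semiconj {A B : Type*} [MeasurableSpace A] [MeasurableSpace B]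
    {ρ : Measure A} {R : A → A} {Q : B → B} {π : A → B} (hR : Ergodic R ρ) (hπ : Measurable π)
    (hQ : Measurable Q) (hsemi : ∀ᵐ a ∂ρ, π (R a) = Q (π a)) : Ergodic Q (ρ.map π) := by
  have hmp : (ρ.map π).map Q = ρ.map π := by
    rw [Measure.map_map hQ hπ]
    nth_rw 2 [← hR.map_eq]
    rw [Measure.map_map hπ hR.measurable]
    exact Measure.map_congr (hsemi.mono fun a ha => ha.symm)
  refine ⟨⟨hQ, hmp⟩, ⟨fun {s} hs hinv => ?_⟩⟩
  have h := hR.quasiErgodic.ae_mem_or_ae_notMem₀ (s := π ⁻¹' s) (hπ hs).nullMeasurableSet (by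
    filter_upwards [hsemi] with a ha
    change (π (R a) ∈ s) = (π a ∈ s)
    rw [ha, ← Set.mem_preimage, hinv])
  rw [eventuallyConst_set']
  rcases h with h | h
  · right
    rw [eventuallyEq_univ]
    exact (ae_map_iff hπ.aemeasurable hs).2 h
  · left
    rw [eventuallyEq_empty]
    exact (ae_map_iff hπ.aemeasurable hs.compl).2 h

/-- An almost everywhere intertwining relation passes to iterates. -/
theorem ae_semiconj_iterate {A B : Type*} [MeasurableSpace A] {ρ : Measure A} {R : A → A}
    {Q : B → B} {π : A → B} (hR : MeasurePreserving R ρ ρ)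
    (hsemi : ∀ᵐ a ∂ρ, π (R a) = Q (π a)) (n : ℕ) :
    ∀ᵐ a ∂ρ, π (R^[n] a) = Q^[n] (π a) := by
  induction n with
  | zero => simp
  | succ n ih =>
    filter_upwards [hsemi, hR.quasiMeasurePreserving.ae ih] with a h1 h2
    rw [Function.iterate_succ_apply, Function.iterate_succ_apply, h2, h1]

/-- In a uniquely ergodic model of a totally ergodic system with AOP, the correlations of a
continuous function of zero mean along two large prime powers of the transformation are small
for every ergodic measure of the product map. -/
theorem AOP.norm_integral_le {X : Type*} [MeasurableSpace X]
    {μ : Measure X} [IsProbabilityMeasure μ] {T : X → X} (hT : MeasurePreserving T μ μ)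
    (hTerg : TotallyErgodic T μ) (hAOP : AOP T μ)
    {Y : Type*} [MetricSpace Y] [CompactSpace Y] [MeasurableSpace Y] [BorelSpace Y]
    {S : Y → Y} (hScont : Continuous S) {ν : Measure Y}
    (huniq : UniquelyErgodicWith S ν) (hiso : MeasureIso T μ S ν)
    {f : Y → ℂ} (hf : Continuous f) (hf_int : (∫ y, f y ∂ν) = 0) {ε : ℝ} (hε : 0 < ε) :
    ∃ N : ℕ, ∀ r s : ℕ, r.Prime → s.Prime → r ≠ s → N ≤ r → N ≤ s →
      ∀ ρ : Measure (Y × Y), IsProbabilityMeasure ρ → Ergodic (Prod.map S^[r] S^[s]) ρ →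
        ‖∫ p, f p.1 * (starRingEnd ℂ) (f p.2) ∂ρ‖ ≤ ε := by
  obtain ⟨φ, ψ, hφ, hψ, hmap, hψφ, hφψ, hsemi⟩ := hiso
  have := huniq.1
  have hS : Measurable S := hScont.measurable
  have hmapψ : ν.map ψ = μ := by
    rw [← hmap, Measure.map_map hψ hφ, Measure.map_congr (f := ψ ∘ φ) (g := id) hψφ, Measure.map_id]
  have hφmp : MeasurePreserving φ μ ν := ⟨hφ, hmap⟩
  have hψmp : MeasurePreserving ψ ν μ := ⟨hψ, hmapψ⟩
  have hSmp : MeasurePreserving S ν ν := ⟨hS, huniq.2.1⟩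
  have hψsemi : ∀ᵐ y ∂ν, ψ (S y) = T (ψ y) := by
    filter_upwards [hφψ, hψmp.quasiMeasurePreserving.ae hsemi,
      hψmp.quasiMeasurePreserving.ae (hT.quasiMeasurePreserving.ae hψφ)] with y h1 h2 h3
    rw [h1] at h2
    rw [← h2, h3]
  have hSerg : ∀ r : ℕ, r ≠ 0 → Ergodic S^[r] ν := fun r hr => by
    rw [← hmap]
    exact (hTerg r hr).map_of_ae_semiconj hφ (hS.iterate r) (ae_semiconj_iterate hT hsemi r)
  obtain ⟨B, hB⟩ : ∃ B, ∀ y, ‖f y‖ ≤ B := by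
    obtain ⟨B, hB⟩ := isCompact_univ.exists_bound_of_continuousOn hf.continuousOn
    exact ⟨B, fun y => hB y trivial⟩
  have hfφ : MemLp (f ∘ φ) 2 μ :=
    MemLp.of_bound (hf.measurable.comp hφ).aestronglyMeasurable B (ae_of_all _ fun x => hB _)
  have hfφ0 : ∫ x, (f ∘ φ) x ∂μ = 0 := by
    rw [← hf_int, ← hmap, integral_map hφ.aemeasurable hf.measurable.aestronglyMeasurable]
    rfl
  obtain ⟨N, hN⟩ := hAOP (f ∘ φ) (f ∘ φ) hfφ hfφ hfφ0 hfφ0 ε hε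
  refine ⟨N, fun r s hr hs hrs hNr hNs ρ hρ herg => ?_⟩
  have h1 : ρ.map Prod.fst = ν := by
    have := Measure.isProbabilityMeasure_map (μ := ρ) measurable_fst.aemeasurable
    exact huniq.eq_of_iterate hS hr.ne_zero (hSerg r hr.ne_zero)
      (herg.map_of_ae_semiconj measurable_fst (hS.iterate r) (by simp)).toMeasurePreserving
  have h2 : ρ.map Prod.snd = ν := by
    have := Measure.isProbabilityMeasure_map (μ := ρ) measurable_snd.aemeasurable
    exact huniq.eq_of_iterate hS hs.ne_zero (hSerg s hs.ne_zero)
      (herg.map_of_ae_semiconj measurable_snd (hS.iterate s) (by simp)).toMeasurePreserving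
  have hfst : MeasurePreserving Prod.fst ρ ν := ⟨measurable_fst, h1⟩
  have hsnd : MeasurePreserving Prod.snd ρ ν := ⟨measurable_snd, h2⟩
  have hΨ : Measurable (Prod.map ψ ψ) := hψ.prodMap hψ
  have key := hN r s hr hs hrs hNr hNs (ρ.map (Prod.map ψ ψ))
    (Measure.isProbabilityMeasure_map hΨ.aemeasurable)
    (by
      rw [Measure.map_map measurable_fst hΨ, Prod.map_fst', ← Measure.map_map hψ measurable_fst,
        h1, hmapψ])
    (by
      rw [Measure.map_map measurable_snd hΨ, Prod.map_snd', ← Measure.map_map hψ measurable_snd,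
        h2, hmapψ])
    (herg.map_of_ae_semiconj hΨ
      ((hT.measurable.iterate r).prodMap (hT.measurable.iterate s)) (by
        filter_upwards [hfst.quasiMeasurePreserving.ae (ae_semiconj_iterate hSmp hψsemi r),
          hsnd.quasiMeasurePreserving.ae (ae_semiconj_iterate hSmp hψsemi s)] with p hp1 hp2
        simp [Prod.map, hp1, hp2]))
  rw [integral_map hΨ.aemeasurable (by
    have := (hf.measurable.comp hφ)
    exact ((this.comp measurable_fst).mul
      (Complex.continuous_conj.measurable.comp (this.comp measurable_snd))).aestronglyMeasurable)]
    at key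
  convert key using 2
  refine integral_congr_ae ?_
  filter_upwards [hfst.quasiMeasurePreserving.ae hφψ, hsnd.quasiMeasurePreserving.ae hφψ]
    with p hp1 hp2
  simp [hp1, hp2]

/-- In a uniquely ergodic model of a totally ergodic system with AOP, the correlations along
an orbit of a continuous function of zero mean, at two large distinct primes, are small. -/
theorem AOP.eventually_norm_sum_le {X : Type*} [MeasurableSpace X]
    {μ : Measure X} [IsProbabilityMeasure μ] {T : X → X} (hT : MeasurePreserving T μ μ)
    (hTerg : TotallyErgodic T μ) (hAOP : AOP T μ)
    {Y : Type*} [MetricSpace Y] [CompactSpace Y] [MeasurableSpace Y] [BorelSpace Y]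
    {S : Y → Y} (hScont : Continuous S) {ν : Measure Y}
    (huniq : UniquelyErgodicWith S ν) (hiso : MeasureIso T μ S ν)
    {f : Y → ℂ} (hf : Continuous f) (hf_int : (∫ y, f y ∂ν) = 0) (y : Y) {ε : ℝ} (hε : 0 < ε) :
    ∃ N : ℕ, ∀ r s : ℕ, r.Prime → s.Prime → r ≠ s → N ≤ r → N ≤ s →
      ∀ᶠ M : ℕ in atTop, ‖∑ n ∈ Finset.Icc 1 M,
        f (S^[r * n] y) * (starRingEnd ℂ) (f (S^[s * n] y))‖ ≤ ε * M := by
  obtain ⟨N, hN⟩ := hAOP.norm_integral_le hT hTerg hScont huniq hiso hf hf_int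
    (show 0 < ε / 4 by positivity)
  refine ⟨N, fun r s hr hs hrs hNr hNs => ?_⟩
  have hR : Continuous (Prod.map S^[r] S^[s]) := (hScont.iterate r).prodMap (hScont.iterate s)
  let F : Y × Y → ℂ := fun p => f p.1 * (starRingEnd ℂ) (f p.2)
  have hF : Continuous F := (hf.comp continuous_fst).mul
    (Complex.continuous_conj.comp (hf.comp continuous_snd))
  have hFint : ∀ ρ : ProbabilityMeasure (Y × Y), Integrable F (ρ : Measure (Y × Y)) := fun ρ =>
    (BoundedContinuousFunction.mkOfCompact ⟨F, hF⟩).integrable _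
  have hlin : ∀ L : ℂ →L[ℝ] ℝ, (∀ w, |L w| ≤ ‖w‖) → ∀ᶠ M : ℕ in atTop,
      L (∑ n ∈ Finset.Icc 1 M, F ((Prod.map S^[r] S^[s])^[n] (y, y))) ≤ ε / 2 * M := by
    intro L hL
    have := eventually_birkhoff_le hR
      (BoundedContinuousFunction.mkOfCompact ⟨fun p => L (F p), L.continuous.comp hF⟩)
      (c := ε / 4) (c' := ε / 2) (fun ρ hρ => by
        change ∫ p, L (F p) ∂(ρ : Measure (Y × Y)) ≤ _
        rw [L.integral_comp_comm (hFint ρ)]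
        exact (le_abs_self _).trans ((hL _).trans (hN r s hr hs hrs hNr hNs ρ inferInstance hρ)))
      (by linarith) (y, y)
    filter_upwards [this, eventually_gt_atTop 0] with M hM hM0
    have hM0' : (0 : ℝ) < M := by exact_mod_cast hM0
    rw [inv_mul_le_iff₀ hM0'] at hM
    rw [map_sum, mul_comm (ε / 2)]
    exact hM
  filter_upwards [hlin Complex.reCLM Complex.abs_re_le_norm,
    hlin (-Complex.reCLM) (fun w => by simpa using Complex.abs_re_le_norm w),
    hlin Complex.imCLM Complex.abs_im_le_norm,
    hlin (-Complex.imCLM) (fun w => by simpa using Complex.abs_im_le_norm w)] with M h1 h2 h3 h4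
  have hsum : ∑ n ∈ Finset.Icc 1 M, f (S^[r * n] y) * (starRingEnd ℂ) (f (S^[s * n] y)) =
      ∑ n ∈ Finset.Icc 1 M, F ((Prod.map S^[r] S^[s])^[n] (y, y)) := by
    refine Finset.sum_congr rfl fun n _ => ?_
    simp [F, Prod.map_iterate, Function.iterate_mul]
  rw [hsum]
  refine (Complex.norm_le_abs_re_add_abs_im _).trans ?_
  linarith [show |Complex.re _| ≤ _ from abs_le'.2 ⟨h1, h2⟩,
    show |Complex.im _| ≤ _ from abs_le'.2 ⟨h3, h4⟩]

/-- The **Turán–Kubilius inequality** for the number of prime divisors in a finite set. -/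
theorem turan_kubilius (P : Finset ℕ) (hP : ∀ p ∈ P, p.Prime) (N : ℕ) :
    ∑ n ∈ Finset.Icc 1 N, (((P.filter (· ∣ n)).card : ℝ) - ∑ p ∈ P, (p : ℝ)⁻¹) ^ 2 ≤
      N * (∑ p ∈ P, (p : ℝ)⁻¹) + 2 * (∑ p ∈ P, (p : ℝ)⁻¹) * P.card := by
  set A : ℝ := ∑ p ∈ P, (p : ℝ)⁻¹ with hA
  have hA0 : 0 ≤ A := Finset.sum_nonneg fun p _ => by positivity
  have hcard : ∀ n : ℕ, ((P.filter (· ∣ n)).card : ℝ) = ∑ p ∈ P, if p ∣ n then (1 : ℝ) else 0 :=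
    fun n => by rw [Finset.sum_boole]
  have hcount : ∀ d : ℕ, ∑ n ∈ Finset.Icc 1 N, (if d ∣ n then (1 : ℝ) else 0) = (N / d : ℕ) :=
    fun d => by rw [Finset.sum_boole, ← Nat.Ioc_filter_dvd_card_eq_div]; rfl
  have hsq : ∑ n ∈ Finset.Icc 1 N, ((P.filter (· ∣ n)).card : ℝ) ^ 2 ≤ N * (A ^ 2 + A) := by
    have : ∀ p ∈ P, ∀ q ∈ P, ∑ n ∈ Finset.Icc 1 N,
        ((if p ∣ n then (1 : ℝ) else 0) * (if q ∣ n then (1 : ℝ) else 0)) ≤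
        N * ((p : ℝ)⁻¹ * (q : ℝ)⁻¹ + if p = q then (p : ℝ)⁻¹ else 0) := by
      intro p hp q hq
      by_cases hpq : p = q
      · subst hpq
        have : ∀ n : ℕ, (if p ∣ n then (1 : ℝ) else 0) * (if p ∣ n then (1 : ℝ) else 0) =
            if p ∣ n then (1 : ℝ) else 0 := fun n => by split_ifs <;> simp
        simp only [this, hcount, if_true]
        refine Nat.cast_div_le.trans ?_
        rw [div_eq_mul_inv]
        gcongr
        have : (0 : ℝ) ≤ (p : ℝ)⁻¹ * (p : ℝ)⁻¹ := by positivity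
        linarith
      · have hcop : Nat.Coprime p q := (Nat.coprime_primes (hP p hp) (hP q hq)).2 hpq
        have : ∀ n : ℕ, (if p ∣ n then (1 : ℝ) else 0) * (if q ∣ n then (1 : ℝ) else 0) =
            if p * q ∣ n then (1 : ℝ) else 0 := fun n => by
          by_cases h1 : p ∣ n <;> by_cases h2 : q ∣ n <;>
            simp [h1, h2, hcop.mul_dvd_of_dvd_of_dvd, mt (dvd_of_mul_right_dvd (a := p)),
              mt (dvd_of_mul_left_dvd (a := p))]
        simp only [this, hcount, if_neg hpq, add_zero]
        refine Nat.cast_div_le.trans ?_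
        rw [div_eq_mul_inv, Nat.cast_mul, mul_inv]
    calc ∑ n ∈ Finset.Icc 1 N, ((P.filter (· ∣ n)).card : ℝ) ^ 2
        = ∑ p ∈ P, ∑ q ∈ P, ∑ n ∈ Finset.Icc 1 N,
          ((if p ∣ n then (1 : ℝ) else 0) * (if q ∣ n then (1 : ℝ) else 0)) := by
          simp only [hcard, sq, Finset.sum_mul_sum]
          rw [Finset.sum_comm]
          exact Finset.sum_congr rfl fun p _ => Finset.sum_comm
      _ ≤ ∑ p ∈ P, ∑ q ∈ P, N * ((p : ℝ)⁻¹ * (q : ℝ)⁻¹ + if p = q then (p : ℝ)⁻¹ else 0) :=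
          Finset.sum_le_sum fun p hp => Finset.sum_le_sum fun q hq => this p hp q hq
      _ = N * (A ^ 2 + A) := by
          simp only [← Finset.mul_sum, Finset.sum_add_distrib]
          rw [← Finset.sum_mul, ← hA, sq]
          congr 2
          exact Finset.sum_congr rfl fun p hp => by simp [hp]
  have hlin : N * A - P.card ≤ ∑ n ∈ Finset.Icc 1 N, ((P.filter (· ∣ n)).card : ℝ) := by
    simp only [hcard]
    rw [Finset.sum_comm]
    simp only [hcount]
    rw [hA, Finset.mul_sum, Finset.card_eq_sum_ones, Nat.cast_sum, ← Finset.sum_sub_distrib]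
    refine Finset.sum_le_sum fun p hp => ?_
    have := Nat.lt_floor_add_one ((N : ℝ) / p)
    rw [Nat.floor_div_natCast, Nat.floor_natCast] at this
    rw [← div_eq_mul_inv, Nat.cast_one]
    linarith
  calc ∑ n ∈ Finset.Icc 1 N, (((P.filter (· ∣ n)).card : ℝ) - A) ^ 2
      = ∑ n ∈ Finset.Icc 1 N, ((P.filter (· ∣ n)).card : ℝ) ^ 2
        - 2 * A * ∑ n ∈ Finset.Icc 1 N, ((P.filter (· ∣ n)).card : ℝ) + N * A ^ 2 := by
        rw [Finset.mul_sum, ← Finset.sum_sub_distrib]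
        have : (N : ℝ) * A ^ 2 = ∑ n ∈ Finset.Icc 1 N, A ^ 2 := by simp
        rw [this, ← Finset.sum_add_distrib]
        exact Finset.sum_congr rfl fun n _ => by ring
    _ ≤ N * A + 2 * A * P.card := by nlinarith

/-- Square of a bilinear sum over a block of primes, after Cauchy–Schwarz in the long variable. -/
theorem norm_sq_bilinear_block_le {a u v : ℕ → ℂ} (ha : ∀ n, ‖a n‖ ≤ 1) (hu : ∀ n, ‖u n‖ ≤ 1)
    (hv : ∀ n, ‖v n‖ ≤ 1) {Q : Finset ℕ} {D : ℕ} (hD : 0 < D) (hQ : ∀ p ∈ Q, D ≤ p)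
    {ε C : ℝ} (hε : 0 ≤ ε) (hC : 0 ≤ C)
    (hcorr : ∀ p ∈ Q, ∀ q ∈ Q, p ≠ q → ∀ M : ℕ,
      ‖∑ n ∈ Finset.Icc 1 M, a (p * n) * (starRingEnd ℂ) (a (q * n))‖ ≤ ε * M + C) (N : ℕ) :
    ‖∑ p ∈ Q, ∑ m ∈ Finset.Icc 1 (N / p), v p * u m * a (p * m)‖ ^ 2 ≤
      (N / D : ℝ) * (Q.card * (N / D) + Q.card ^ 2 * (ε * (N / D) + C)) := by
  let w : ℕ → ℂ := fun m => ∑ p ∈ Q, if m ≤ N / p then v p * a (p * m) else 0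
  have hDr : (0 : ℝ) < D := by exact_mod_cast hD
  have hMle : ((N / D : ℕ) : ℝ) ≤ N / D := Nat.cast_div_le
  have hfilter : ∀ p ∈ Q, (Finset.Icc 1 (N / D)).filter (· ≤ N / p) = Finset.Icc 1 (N / p) := by
    intro p hp
    ext m
    have := Nat.div_le_div_left (a := N) (hQ p hp) hD
    simp only [Finset.mem_filter, Finset.mem_Icc]
    omega
  have hswap : ∑ p ∈ Q, ∑ m ∈ Finset.Icc 1 (N / p), v p * u m * a (p * m) =
      ∑ m ∈ Finset.Icc 1 (N / D), u m * w m := by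
    simp only [w, Finset.mul_sum]
    rw [Finset.sum_comm]
    refine Finset.sum_congr rfl fun p hp => ?_
    rw [← hfilter p hp, Finset.sum_filter]
    exact Finset.sum_congr rfl fun m _ => by split_ifs <;> ring
  have hnorm : ‖∑ m ∈ Finset.Icc 1 (N / D), u m * w m‖ ≤ ∑ m ∈ Finset.Icc 1 (N / D), ‖w m‖ := by
    refine (norm_sum_le _ _).trans (Finset.sum_le_sum fun m _ => ?_)
    rw [norm_mul]
    exact mul_le_of_le_one_left (norm_nonneg _) (hu m)
  have hpair : ∀ p ∈ Q, ∀ q ∈ Q, ‖∑ m ∈ Finset.Icc 1 (N / D),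
      (if m ≤ N / p then v p * a (p * m) else 0) *
        (starRingEnd ℂ) (if m ≤ N / q then v q * a (q * m) else 0)‖ ≤
      (if p = q then (N / D : ℝ) else 0) + (ε * (N / D) + C) := by
    intro p hp q hq
    have hND : (0 : ℝ) ≤ N / D := by positivity
    by_cases hpq : p = q
    · rw [if_pos hpq]
      have : ‖∑ m ∈ Finset.Icc 1 (N / D), (if m ≤ N / p then v p * a (p * m) else 0) *
        (starRingEnd ℂ) (if m ≤ N / q then v q * a (q * m) else 0)‖ ≤
          ∑ m ∈ Finset.Icc 1 (N / D), (1 : ℝ) := by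
        have hb : ∀ p m : ℕ, ‖if m ≤ N / p then v p * a (p * m) else 0‖ ≤ 1 := fun p m => by
          split_ifs
          · rw [norm_mul]
            exact mul_le_one₀ (hv _) (norm_nonneg _) (ha _)
          · simp
        refine (norm_sum_le _ _).trans (Finset.sum_le_sum fun m _ => ?_)
        rw [norm_mul, RCLike.norm_conj]
        exact mul_le_one₀ (hb _ _) (norm_nonneg _) (hb _ _)
      refine this.trans ?_
      simp only [Finset.sum_const, Nat.card_Icc, add_tsub_cancel_right, nsmul_eq_mul, mul_one]
      have : 0 ≤ ε * (N / D : ℝ) := by positivity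
      linarith
    · rw [if_neg hpq, zero_add]
      have hmin : (Finset.Icc 1 (N / D)).filter (fun m => m ≤ N / p ∧ m ≤ N / q) =
          Finset.Icc 1 (min (N / p) (N / q)) := by
        ext m
        have := Nat.div_le_div_left (a := N) (hQ p hp) hD
        simp only [Finset.mem_filter, Finset.mem_Icc]
        omega
      have heq : ∑ m ∈ Finset.Icc 1 (N / D), (if m ≤ N / p then v p * a (p * m) else 0) *
        (starRingEnd ℂ) (if m ≤ N / q then v q * a (q * m) else 0) =
          v p * (starRingEnd ℂ) (v q) * ∑ m ∈ Finset.Icc 1 (min (N / p) (N / q)),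
            a (p * m) * (starRingEnd ℂ) (a (q * m)) := by
        rw [← hmin, Finset.sum_filter, Finset.mul_sum]
        refine Finset.sum_congr rfl fun m _ => ?_
        by_cases h1 : m ≤ N / p <;> by_cases h2 : m ≤ N / q <;> simp [h1, h2]
        ring
      rw [heq, norm_mul, norm_mul, RCLike.norm_conj]
      refine (mul_le_of_le_one_left (norm_nonneg _)
        (mul_le_one₀ (hv _) (norm_nonneg _) (hv _))).trans ((hcorr p hp q hq hpq _).trans ?_)
      gcongr
      refine le_trans ?_ hMle
      exact_mod_cast (min_le_left _ _).trans (Nat.div_le_div_left (hQ p hp) hD)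
  have hsq : ∑ m ∈ Finset.Icc 1 (N / D), ‖w m‖ ^ 2 ≤
      Q.card * (N / D) + Q.card ^ 2 * (ε * (N / D) + C) := by
    have hcast : ((∑ m ∈ Finset.Icc 1 (N / D), ‖w m‖ ^ 2 : ℝ) : ℂ) =
        ∑ p ∈ Q, ∑ q ∈ Q, ∑ m ∈ Finset.Icc 1 (N / D),
          (if m ≤ N / p then v p * a (p * m) else 0) *
          (starRingEnd ℂ) (if m ≤ N / q then v q * a (q * m) else 0) := by
      push_cast
      simp only [← Complex.mul_conj', w, map_sum, Finset.sum_mul_sum]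
      rw [Finset.sum_comm]
      exact Finset.sum_congr rfl fun p _ => Finset.sum_comm
    have h0 : 0 ≤ ∑ m ∈ Finset.Icc 1 (N / D), ‖w m‖ ^ 2 :=
      Finset.sum_nonneg fun m _ => by positivity
    rw [← Complex.norm_of_nonneg h0, hcast]
    calc _ ≤ ∑ p ∈ Q, ∑ q ∈ Q, ((if p = q then (N / D : ℝ) else 0) + (ε * (N / D) + C)) :=
          (norm_sum_le _ _).trans (Finset.sum_le_sum fun p hp => (norm_sum_le _ _).trans
            (Finset.sum_le_sum fun q hq => hpair p hp q hq))
      _ = _ := by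
          simp only [Finset.sum_add_distrib, Finset.sum_ite_eq, Finset.sum_ite_mem,
            Finset.inter_self, Finset.sum_const, nsmul_eq_mul]
          ring
  rw [hswap]
  calc _ ≤ (∑ m ∈ Finset.Icc 1 (N / D), ‖w m‖) ^ 2 := by gcongr
    _ ≤ ((Finset.Icc 1 (N / D)).card : ℝ) * ∑ m ∈ Finset.Icc 1 (N / D), ‖w m‖ ^ 2 :=
        sq_sum_le_card_mul_sum_sq
    _ ≤ _ := by
        rw [Nat.card_Icc, add_tsub_cancel_right]
        gcongr

/-- Bilinear sums over a finite set of primes, obtained by splitting it into dyadic blocks. -/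
theorem norm_bilinear_le {a u v : ℕ → ℂ} (ha : ∀ n, ‖a n‖ ≤ 1) (hu : ∀ n, ‖u n‖ ≤ 1)
    (hv : ∀ n, ‖v n‖ ≤ 1) {P : Finset ℕ} (hP : ∀ p ∈ P, p ≠ 0)
    {ε C : ℝ} (hε : 0 ≤ ε) (hC : 0 ≤ C)
    (hcorr : ∀ p ∈ P, ∀ q ∈ P, p ≠ q → ∀ M : ℕ,
      ‖∑ n ∈ Finset.Icc 1 M, a (p * n) * (starRingEnd ℂ) (a (q * n))‖ ≤ ε * M + C) (N : ℕ) :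
    ‖∑ p ∈ P, ∑ m ∈ Finset.Icc 1 (N / p), v p * u m * a (p * m)‖ ≤
      4 * N + 2 * N * √ε * (∑ p ∈ P, (p : ℝ)⁻¹) + √(N * C) * P.card := by
  let Q : ℕ → Finset ℕ := fun j => P.filter (fun p => Nat.log 2 p = j)
  have hmaps : ∀ p ∈ P, Nat.log 2 p ∈ P.image (Nat.log 2) := fun p hp =>
    Finset.mem_image_of_mem _ hp
  have hQlow : ∀ j, ∀ p ∈ Q j, 2 ^ j ≤ p := fun j p hp => by
    obtain ⟨hpP, rfl⟩ := Finset.mem_filter.1 hp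
    exact Nat.pow_log_le_self 2 (hP p hpP)
  have hQhigh : ∀ j, ∀ p ∈ Q j, p < 2 ^ (j + 1) := fun j p hp => by
    obtain ⟨-, rfl⟩ := Finset.mem_filter.1 hp
    exact Nat.lt_pow_succ_log_self (by norm_num) p
  have hQcard : ∀ j, ((Q j).card : ℝ) ≤ 2 ^ j := fun j => by
    have : (Q j).card ≤ (Finset.Ico (2 ^ j) (2 ^ (j + 1))).card := Finset.card_le_card fun p hp =>
      Finset.mem_Ico.2 ⟨hQlow j p hp, hQhigh j p hp⟩
    rw [Nat.card_Ico, pow_succ] at this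
    have h : (Q j).card ≤ 2 ^ j := by omega
    exact_mod_cast h
  have hblock : ∀ j, ‖∑ p ∈ Q j, ∑ m ∈ Finset.Icc 1 (N / p), v p * u m * a (p * m)‖ ≤
      N * (3 / 4) ^ j + N * √ε * ((Q j).card / 2 ^ j) + √(N * C) * (Q j).card := fun j => by
    have h := norm_sq_bilinear_block_le ha hu hv (Q := Q j) (D := 2 ^ j) (by positivity)
      (hQlow j) hε hC (fun p hp q hq => hcorr p (Finset.mem_filter.1 hp).1 q
        (Finset.mem_filter.1 hq).1) N
    refine (abs_le_of_sq_le_sq' (h.trans ?_) (by positivity)).2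
    have hc := hQcard j
    push_cast
    set c : ℝ := ((Q j).card : ℝ)
    have hc0 : 0 ≤ c := Nat.cast_nonneg _
    set D : ℝ := 2 ^ j with hD
    have hD1 : 1 ≤ D := one_le_pow₀ (by norm_num)
    have hN : (0 : ℝ) ≤ N := Nat.cast_nonneg _
    have h34 : D⁻¹ ≤ ((3 / 4 : ℝ) ^ j) ^ 2 := by
      rw [hD, ← inv_pow, ← pow_mul, mul_comm, pow_mul]
      gcongr
      norm_num
    have hcD : c * D⁻¹ ≤ 1 := by rw [← div_eq_mul_inv, div_le_one (by positivity)]; exact hc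
    have hDi : D⁻¹ ≤ 1 := inv_le_one_of_one_le₀ hD1
    have hDi0 : 0 ≤ D⁻¹ := by positivity
    have e1 : N / D * (c * (N / D)) ≤ (N * (3 / 4 : ℝ) ^ j) ^ 2 := by
      calc N / D * (c * (N / D)) = N ^ 2 * (D⁻¹ * (c * D⁻¹)) := by ring
        _ ≤ N ^ 2 * (((3 / 4 : ℝ) ^ j) ^ 2 * 1) := by gcongr
        _ = _ := by ring
    have e2 : N / D * (c ^ 2 * (ε * (N / D))) = (N * √ε * (c / D)) ^ 2 := by
      rw [mul_pow, mul_pow, Real.sq_sqrt hε]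
      ring
    have e3 : N / D * (c ^ 2 * C) ≤ (√(N * C) * c) ^ 2 := by
      rw [mul_pow, Real.sq_sqrt (by positivity)]
      calc N / D * (c ^ 2 * C) = N * C * c ^ 2 * D⁻¹ := by ring
        _ ≤ N * C * c ^ 2 * 1 := by gcongr
        _ = _ := by ring
    have p1 : 0 ≤ N * (3 / 4 : ℝ) ^ j := by positivity
    have p2 : 0 ≤ N * √ε * (c / D) := by positivity
    have p3 : 0 ≤ √(N * C) * c := by positivity
    nlinarith [mul_nonneg p1 p2, mul_nonneg p1 p3, mul_nonneg p2 p3]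
  have hgeom : ∑ j ∈ P.image (Nat.log 2), (3 / 4 : ℝ) ^ j ≤ 4 := by
    refine (Summable.sum_le_tsum _ (fun _ _ => by positivity)
      (summable_geometric_of_lt_one (by norm_num) (by norm_num))).trans_eq ?_
    rw [tsum_geometric_of_lt_one (by norm_num) (by norm_num)]
    norm_num
  have hdens : ∑ j ∈ P.image (Nat.log 2), ((Q j).card : ℝ) / 2 ^ j ≤
      2 * ∑ p ∈ P, (p : ℝ)⁻¹ := by
    rw [← Finset.sum_fiberwise_of_maps_to hmaps, Finset.mul_sum]
    refine Finset.sum_le_sum fun j _ => ?_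
    rw [Finset.card_eq_sum_ones, Nat.cast_sum, Finset.sum_div, Finset.mul_sum]
    refine Finset.sum_le_sum fun p hp => ?_
    have h1 : (p : ℝ) ≤ 2 ^ (j + 1) := by exact_mod_cast (hQhigh j p hp).le
    have h0 : (0 : ℝ) < p := by
      exact_mod_cast Nat.pos_of_ne_zero (hP p (Finset.mem_filter.1 hp).1)
    rw [Nat.cast_one, ← div_eq_mul_inv, div_le_div_iff₀ (by positivity) h0]
    rw [pow_succ] at h1
    linarith
  have hcard : ∑ j ∈ P.image (Nat.log 2), ((Q j).card : ℝ) = P.card := by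
    rw [Finset.card_eq_sum_card_fiberwise hmaps, Nat.cast_sum]
  rw [← Finset.sum_fiberwise_of_maps_to hmaps]
  calc _ ≤ ∑ j ∈ P.image (Nat.log 2), (N * (3 / 4 : ℝ) ^ j + N * √ε * ((Q j).card / 2 ^ j)
          + √(N * C) * (Q j).card) :=
        (norm_sum_le _ _).trans (Finset.sum_le_sum fun j _ => hblock j)
    _ = N * ∑ j ∈ P.image (Nat.log 2), (3 / 4 : ℝ) ^ j
        + N * √ε * ∑ j ∈ P.image (Nat.log 2), ((Q j).card : ℝ) / 2 ^ j + √(N * C) * P.card := by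
        rw [Finset.sum_add_distrib, Finset.sum_add_distrib, ← Finset.mul_sum, ← Finset.mul_sum,
          ← Finset.mul_sum, hcard]
    _ ≤ N * 4 + N * √ε * (2 * ∑ p ∈ P, (p : ℝ)⁻¹) + √(N * C) * P.card := by gcongr
    _ = _ := by ring

/-- Summation over the multiples of `p` up to `N`. -/
theorem sum_Icc_ite_dvd {E : Type*} [AddCommMonoid E] {p : ℕ} (hp : 0 < p) (N : ℕ) (g : ℕ → E) :
    ∑ n ∈ Finset.Icc 1 N, (if p ∣ n then g n else 0) = ∑ m ∈ Finset.Icc 1 (N / p), g (p * m) := by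
  rw [← Finset.sum_filter]
  symm
  refine Finset.sum_bij (fun m _ => p * m) (fun m hm => ?_)
    (fun m _ m' _ h => Nat.eq_of_mul_eq_mul_left hp h) (fun n hn => ?_) (fun _ _ => rfl)
  · rw [Finset.mem_Icc] at hm
    rw [Finset.mem_filter, Finset.mem_Icc]
    exact ⟨⟨Nat.mul_pos hp hm.1, (Nat.mul_le_mul_left p hm.2).trans (Nat.mul_div_le N p)⟩,
      dvd_mul_right p m⟩
  · rw [Finset.mem_filter, Finset.mem_Icc] at hn
    obtain ⟨⟨h1, h2⟩, m, rfl⟩ := hn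
    exact ⟨m, Finset.mem_Icc.2 ⟨Nat.pos_of_mul_pos_left h1, (Nat.le_div_iff_mul_le hp).2
      (by rwa [mul_comm])⟩, rfl⟩

/-- Quantitative form of the Kátai–Bourgain–Sarnak–Ziegler criterion. -/
theorem norm_sum_mul_multiplicative_le {a u : ℕ → ℂ} (ha : ∀ n, ‖a n‖ ≤ 1) (hu : ∀ n, ‖u n‖ ≤ 1)
    (hmult : ∀ m n : ℕ, Nat.Coprime m n → u (m * n) = u m * u n)
    {P : Finset ℕ} (hP : ∀ p ∈ P, p.Prime) {K : ℕ} (hK : 0 < K) (hPK : ∀ p ∈ P, K ≤ p)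
    {ε C : ℝ} (hε : 0 ≤ ε) (hC : 0 ≤ C)
    (hcorr : ∀ p ∈ P, ∀ q ∈ P, p ≠ q → ∀ M : ℕ,
      ‖∑ n ∈ Finset.Icc 1 M, a (p * n) * (starRingEnd ℂ) (a (q * n))‖ ≤ ε * M + C) (N : ℕ) :
    (∑ p ∈ P, (p : ℝ)⁻¹) * ‖∑ n ∈ Finset.Icc 1 N, a n * u n‖ ≤
      √(N * (N * (∑ p ∈ P, (p : ℝ)⁻¹) + 2 * (∑ p ∈ P, (p : ℝ)⁻¹) * P.card))
        + 2 * N / K * (∑ p ∈ P, (p : ℝ)⁻¹)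
        + (4 * N + 2 * N * √ε * (∑ p ∈ P, (p : ℝ)⁻¹) + √(N * C) * P.card) := by
  set A : ℝ := ∑ p ∈ P, (p : ℝ)⁻¹ with hA
  have hA0 : 0 ≤ A := Finset.sum_nonneg fun p _ => by positivity
  let ω : ℕ → ℝ := fun n => (P.filter (· ∣ n)).card
  have hau : ∀ n, ‖a n * u n‖ ≤ 1 := fun n => by
    rw [norm_mul]
    exact mul_le_one₀ (ha n) (norm_nonneg _) (hu n)
  have hdev : ‖∑ n ∈ Finset.Icc 1 N, a n * u n * ((ω n - A : ℝ) : ℂ)‖ ≤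
      √(N * (N * A + 2 * A * P.card)) := by
    refine Real.le_sqrt_of_sq_le ?_
    calc _ ≤ (∑ n ∈ Finset.Icc 1 N, |ω n - A|) ^ 2 := by
          gcongr
          refine (norm_sum_le _ _).trans (Finset.sum_le_sum fun n _ => ?_)
          rw [norm_mul, Complex.norm_real, Real.norm_eq_abs]
          exact mul_le_of_le_one_left (abs_nonneg _) (hau n)
      _ ≤ ((Finset.Icc 1 N).card : ℝ) * ∑ n ∈ Finset.Icc 1 N, |ω n - A| ^ 2 :=
          sq_sum_le_card_mul_sum_sq
      _ ≤ N * (N * A + 2 * A * P.card) := by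
          rw [Nat.card_Icc, add_tsub_cancel_right]
          simp only [sq_abs]
          gcongr
          exact turan_kubilius P hP N
  have hω : ∑ n ∈ Finset.Icc 1 N, a n * u n * (ω n : ℂ) =
      ∑ p ∈ P, ∑ m ∈ Finset.Icc 1 (N / p), a (p * m) * u (p * m) := by
    have : ∀ n, a n * u n * (ω n : ℂ) = ∑ p ∈ P, if p ∣ n then a n * u n else 0 := fun n => by
      rw [← Finset.sum_filter, Finset.sum_const, nsmul_eq_mul, mul_comm]
      simp [ω]
    simp only [this]
    rw [Finset.sum_comm]
    exact Finset.sum_congr rfl fun p hp => sum_Icc_ite_dvd (hP p hp).pos N fun n => a n * u n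
  have hrepl : ‖∑ p ∈ P, ∑ m ∈ Finset.Icc 1 (N / p), a (p * m) * u (p * m) -
      ∑ p ∈ P, ∑ m ∈ Finset.Icc 1 (N / p), u p * u m * a (p * m)‖ ≤ 2 * N / K * A := by
    rw [← Finset.sum_sub_distrib, hA, Finset.mul_sum]
    refine (norm_sum_le _ _).trans (Finset.sum_le_sum fun p hp => ?_)
    have hp0 : (0 : ℝ) < p := by exact_mod_cast (hP p hp).pos
    have hK0 : (0 : ℝ) < K := by exact_mod_cast hK
    rw [← Finset.sum_sub_distrib]
    calc _ ≤ ∑ m ∈ Finset.Icc 1 (N / p), if p ∣ m then (2 : ℝ) else 0 := by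
          refine (norm_sum_le _ _).trans (Finset.sum_le_sum fun m _ => ?_)
          split_ifs with hdvd
          · refine (norm_sub_le _ _).trans ?_
            have h1 := hau (p * m)
            have h2 : ‖u p * u m * a (p * m)‖ ≤ 1 := by
              rw [norm_mul, norm_mul]
              exact mul_le_one₀ (mul_le_one₀ (hu p) (norm_nonneg _) (hu m)) (norm_nonneg _) (ha _)
            linarith
          · rw [hmult p m (((hP p hp).coprime_iff_not_dvd).2 hdvd), mul_comm (a (p * m)), sub_self,
              norm_zero]
      _ = ((N / p / p : ℕ) : ℝ) * 2 := by
          rw [sum_Icc_ite_dvd (hP p hp).pos]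
          simp
      _ ≤ N / p / p * 2 := by
          gcongr
          exact Nat.cast_div_le.trans (by gcongr; exact Nat.cast_div_le)
      _ ≤ N / p / K * 2 := by
          gcongr
          exact hPK p hp
      _ = 2 * N / K * (p : ℝ)⁻¹ := by field_simp
  have hbil := norm_bilinear_le ha hu hu (fun p hp => (hP p hp).ne_zero) hε hC hcorr N
  have hsplit : (A : ℂ) * ∑ n ∈ Finset.Icc 1 N, a n * u n =
      -∑ n ∈ Finset.Icc 1 N, a n * u n * ((ω n - A : ℝ) : ℂ)
      + (∑ p ∈ P, ∑ m ∈ Finset.Icc 1 (N / p), a (p * m) * u (p * m) -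
        ∑ p ∈ P, ∑ m ∈ Finset.Icc 1 (N / p), u p * u m * a (p * m))
      + ∑ p ∈ P, ∑ m ∈ Finset.Icc 1 (N / p), u p * u m * a (p * m) := by
    rw [← hω]
    simp only [Complex.ofReal_sub, mul_sub, Finset.sum_sub_distrib, ← Finset.sum_mul]
    ring
  calc A * ‖∑ n ∈ Finset.Icc 1 N, a n * u n‖
      = ‖(A : ℂ) * ∑ n ∈ Finset.Icc 1 N, a n * u n‖ := by
        rw [norm_mul, Complex.norm_of_nonneg hA0]
    _ ≤ _ := by
        rw [hsplit]
        refine (norm_add₃_le).trans ?_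
        rw [norm_neg]
        gcongr

/-- There are finite sets of large primes with large sum of reciprocals. -/
theorem exists_primes_sum_inv_ge (K : ℕ) (B : ℝ) :
    ∃ P : Finset ℕ, (∀ p ∈ P, p.Prime) ∧ (∀ p ∈ P, K ≤ p) ∧ B ≤ ∑ p ∈ P, (p : ℝ)⁻¹ := by
  have hnn : ∀ n : ℕ, 0 ≤ Set.indicator {p : ℕ | p.Prime} (fun n : ℕ => (1 : ℝ) / n) n :=
    fun n => Set.indicator_nonneg (fun _ _ => by positivity) n
  have h := (not_summable_iff_tendsto_nat_atTop_of_nonneg hnn).1 not_summable_one_div_on_primes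
  obtain ⟨n, hn, hKn⟩ := ((h.eventually_ge_atTop
    (B + ∑ p ∈ Finset.range K, Set.indicator {p : ℕ | p.Prime} (fun n : ℕ => (1 : ℝ) / n) p)).and
    (eventually_ge_atTop K)).exists
  refine ⟨(Finset.Ico K n).filter Nat.Prime, fun p hp => (Finset.mem_filter.1 hp).2,
    fun p hp => (Finset.mem_Ico.1 (Finset.mem_filter.1 hp).1).1, ?_⟩
  rw [← Finset.sum_range_add_sum_Ico _ hKn] at hn
  rw [Finset.sum_filter]
  refine (le_of_add_le_add_left (by linarith)).trans_eq (Finset.sum_congr rfl fun p _ => ?_)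
  simp [Set.indicator_apply]

/-- The **Kátai–Bourgain–Sarnak–Ziegler criterion**: a bounded sequence whose dilations by
large distinct primes are asymptotically nearly orthogonal is orthogonal to every bounded
multiplicative function. -/
theorem tendsto_average_mul_multiplicative {a u : ℕ → ℂ} (ha : ∀ n, ‖a n‖ ≤ 1)
    (hu : ∀ n, ‖u n‖ ≤ 1) (hmult : ∀ m n : ℕ, Nat.Coprime m n → u (m * n) = u m * u n)
    (hcorr : ∀ ε > (0 : ℝ), ∃ K : ℕ, ∀ r s : ℕ, r.Prime → s.Prime → r ≠ s → K ≤ r → K ≤ s →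
      ∀ᶠ M : ℕ in atTop,
        ‖∑ n ∈ Finset.Icc 1 M, a (r * n) * (starRingEnd ℂ) (a (s * n))‖ ≤ ε * M) :
    Tendsto (fun N : ℕ => (N : ℂ)⁻¹ * ∑ n ∈ Finset.Icc 1 N, a n * u n) atTop (nhds 0) := by
  rw [Metric.tendsto_atTop']
  intro η hη
  obtain ⟨K₁, hK₁⟩ := hcorr ((η / 16) ^ 2) (by positivity)
  obtain ⟨K₂, hK₂⟩ := exists_nat_gt (16 / η)
  obtain ⟨P, hP, hPK, hA⟩ := exists_primes_sum_inv_ge (max K₁ K₂) (40 / η + 128 / η ^ 2)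
  have hK₂r : (0 : ℝ) < K₂ := (by positivity : 0 < 16 / η).trans hK₂
  have hK₂0 : 0 < K₂ := by exact_mod_cast hK₂r
  have hM : ∃ M₀ : ℕ, ∀ p ∈ P, ∀ q ∈ P, p ≠ q → ∀ M ≥ M₀,
      ‖∑ n ∈ Finset.Icc 1 M, a (p * n) * (starRingEnd ℂ) (a (q * n))‖ ≤ (η / 16) ^ 2 * M := by
    have : ∀ᶠ M : ℕ in atTop, ∀ p ∈ P, ∀ q ∈ P, p ≠ q →
        ‖∑ n ∈ Finset.Icc 1 M, a (p * n) * (starRingEnd ℂ) (a (q * n))‖ ≤ (η / 16) ^ 2 * M := by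
      rw [Finset.eventually_all]
      intro p hp
      rw [Finset.eventually_all]
      intro q hq
      by_cases hpq : p = q
      · simp [hpq]
      · filter_upwards [hK₁ p q (hP p hp) (hP q hq) hpq ((le_max_left _ _).trans (hPK p hp))
          ((le_max_left _ _).trans (hPK q hq))] with M hM _ using hM
    obtain ⟨M₀, hM₀⟩ := eventually_atTop.1 this
    exact ⟨M₀, fun p hp q hq hpq M hM => hM₀ M hM p hp q hq hpq⟩
  obtain ⟨M₀, hM₀⟩ := hM
  have hall : ∀ p ∈ P, ∀ q ∈ P, p ≠ q → ∀ M : ℕ,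
      ‖∑ n ∈ Finset.Icc 1 M, a (p * n) * (starRingEnd ℂ) (a (q * n))‖ ≤
        (η / 16) ^ 2 * M + M₀ := by
    intro p hp q hq hpq M
    rcases le_total M₀ M with h | h
    · have := hM₀ p hp q hq hpq M h
      have : (0 : ℝ) ≤ M₀ := Nat.cast_nonneg _
      linarith
    · have h1 : ‖∑ n ∈ Finset.Icc 1 M, a (p * n) * (starRingEnd ℂ) (a (q * n))‖ ≤ M := by
        refine (norm_sum_le_of_le _ (fun n _ => ?_)).trans_eq
          (by simp : ∑ n ∈ Finset.Icc 1 M, (1 : ℝ) = M)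
        rw [norm_mul, RCLike.norm_conj]
        exact mul_le_one₀ (ha _) (norm_nonneg _) (ha _)
      have h2 : (M : ℝ) ≤ M₀ := by exact_mod_cast h
      have : 0 ≤ (η / 16) ^ 2 * (M : ℝ) := by positivity
      linarith
  obtain ⟨N₀, hN₀⟩ := exists_nat_gt (2 * P.card + M₀ * P.card ^ 2 : ℝ)
  refine ⟨N₀, fun N hN => ?_⟩
  have hNr : (2 * P.card + M₀ * P.card ^ 2 : ℝ) < N := hN₀.trans (by exact_mod_cast hN)
  have hN0 : (0 : ℝ) < N := lt_of_le_of_lt (by positivity) hNr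
  have hmain := norm_sum_mul_multiplicative_le ha hu hmult hP hK₂0
    (fun p hp => (le_max_right _ _).trans (hPK p hp)) (by positivity) (Nat.cast_nonneg M₀) hall N
  rw [Real.sqrt_sq (by positivity)] at hmain
  set A : ℝ := ∑ p ∈ P, (p : ℝ)⁻¹
  have hcard0 : (0 : ℝ) ≤ P.card := Nat.cast_nonneg _
  have hMc : 0 ≤ (M₀ : ℝ) * P.card ^ 2 := by positivity
  have hA1 : 40 / η ≤ A := (le_add_of_nonneg_right (by positivity)).trans hA
  have hA2 : 128 / η ^ 2 ≤ A := (le_add_of_nonneg_left (by positivity)).trans hA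
  have hA0 : 0 < A := lt_of_lt_of_le (by positivity) hA1
  rw [div_le_iff₀ hη] at hA1
  rw [div_le_iff₀ (by positivity)] at hA2
  have hb1 : √(N * (N * A + 2 * A * P.card)) ≤ N * (A * η / 8) := by
    refine Real.sqrt_le_iff.2 ⟨by positivity, ?_⟩
    calc N * (N * A + 2 * A * P.card) ≤ N * (N * A + A * N) := by
          rw [mul_comm 2 A, mul_assoc]
          gcongr
          linarith
      _ = N ^ 2 * A * 128 / 64 := by ring
      _ ≤ N ^ 2 * A * (A * η ^ 2) / 64 := by gcongr
      _ = _ := by ring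
  have hb2 : 2 * N / K₂ * A ≤ N * (A * η / 8) := by
    have : 2 / K₂ ≤ η / 8 := by
      rw [div_lt_iff₀ hη] at hK₂
      rw [div_le_div_iff₀ hK₂r (by norm_num)]
      linarith
    calc 2 * N / K₂ * A = N * A * (2 / K₂) := by ring
      _ ≤ N * A * (η / 8) := by gcongr
      _ = _ := by ring
  have hb3 : √(N * M₀) * P.card ≤ N := by
    rw [← Real.sqrt_sq hcard0, ← Real.sqrt_mul (by positivity), Real.sqrt_le_left hN0.le]
    nlinarith
  rw [dist_zero_right, norm_mul, norm_inv, Complex.norm_natCast, inv_mul_lt_iff₀ hN0]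
  refine lt_of_mul_lt_mul_left (hmain.trans_lt ?_) hA0.le
  have : 0 < N * (A * η) := by positivity
  nlinarith

/-- **Theorem 1.2.** If `T` is a totally ergodic automorphism of a standard Borel probability
space `(X,μ)` with the AOP property, and `(Y,S)` is a uniquely ergodic model of `(X,μ,T)`,
then for every multiplicative `u : ℕ → ℂ`, `|u| ≤ 1`, every continuous `f` with `∫ f dν = 0`
and every `y ∈ Y`, `(1/N) ∑_{n ≤ N} f(Sⁿ y) u(n) → 0`. -/
theorem sarnak_of_AOP_uniquelyErgodicModel
    {X : Type*} [MeasurableSpace X] [StandardBorelSpace X]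
    (μ : Measure X) [IsProbabilityMeasure μ] (T : X ≃ᵐ X)
    (hT : MeasurePreserving T μ μ)
    (hTerg : TotallyErgodic (⇑T) μ)
    (hAOP : AOP (⇑T) μ)
    {Y : Type*} [MetricSpace Y] [CompactSpace Y] [MeasurableSpace Y] [BorelSpace Y]
    (S : Y → Y) (hScont : Continuous S) (ν : Measure Y)
    (huniq : UniquelyErgodicWith S ν)
    (hiso : MeasureIso (⇑T) μ S ν)
    (u : ℕ → ℂ) (hu_mult : ∀ m n : ℕ, Nat.Coprime m n → u (m * n) = u m * u n)
    (hu_bd : ∀ n, ‖u n‖ ≤ 1)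
    (f : Y → ℂ) (hf : Continuous f) (hf_int : (∫ y, f y ∂ν) = 0) (y : Y) :
    Tendsto (fun N : ℕ => (N : ℂ)⁻¹ * ∑ n ∈ Finset.Icc 1 N, f (S^[n] y) * u n)
      atTop (nhds 0) := by
  obtain ⟨B, hB⟩ : ∃ B, ∀ z, ‖f z‖ ≤ B := by
    obtain ⟨B, hB⟩ := isCompact_univ.exists_bound_of_continuousOn hf.continuousOn
    exact ⟨B, fun z => hB z trivial⟩
  have hB1 : 0 < B + 1 := by linarith [(norm_nonneg (f y)).trans (hB y)]
  let c : ℂ := ((B + 1 : ℝ) : ℂ)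
  have hc : c ≠ 0 := Complex.ofReal_ne_zero.2 hB1.ne'
  have hcf : Continuous fun z => c⁻¹ * f z := continuous_const.mul hf
  have h := tendsto_average_mul_multiplicative (a := fun n => c⁻¹ * f (S^[n] y)) (u := u)
    (fun n => by
      rw [norm_mul, norm_inv, Complex.norm_of_nonneg hB1.le, inv_mul_le_iff₀ hB1]
      linarith [hB (S^[n] y)])
    hu_bd hu_mult (fun ε hε => hAOP.eventually_norm_sum_le hT hTerg hScont huniq hiso hcf
      (by rw [integral_const_mul, hf_int, mul_zero]) y hε)
  have h' := h.const_mul c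
  rw [mul_zero] at h'
  refine h'.congr fun N => ?_
  simp only [mul_assoc, ← Finset.mul_sum]
  field_simp
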